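/- arXiv:1506.07996 — 3 statements merged into one kernel-verified Lean document; each statement's English description precedes it below -/
import Mathlib

section
/- Let f_0 ∈ ℂ[z_1,…,z_n] be homogeneous of degree d ≥ 1, let g_1,…,g_m ∈ ℂ[z_1,…,z_n] be homogeneous of degrees d_1,…,d_m with d_i < d for each i, let a_1,…,a_m ∈ ℂ, and define h(t,z) := f_0(z) + Σ_{i=1}^m a_i t^{d−d_i} g_i(z). Suppose z_0 ∈ ℂⁿ satisfies Σ_{i=1}^m a_i (d−d_i) g_i(z_0) ≠ 0, and let γ(u) := (u, u·z_0). Then the one-variable polynomial u ↦ (∂h/∂t)(γ(u)) has vanishing order exactly d−1 at u = 0, and for each j with 1 ≤ j ≤ n the one-variable polynomial u ↦ (∂h/∂z_j)(γ(u)) has vanishing order at least d−1 at u = 0 (with the convention that the zero polynomial has order ∞). Consequently ord₀((∂h/∂t)∘γ) ≤ min_{1≤j≤n} ord₀((∂h/∂z_j)∘γ); in particular the strict inequality ord₀((∂h/∂t)∘γ) > min_{1≤j≤n} ord₀((∂h/∂z_j)∘γ) fails for this curve. -/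
/-!
The polynomial `h` is homogeneous of degree `d` in all the variables `(t, z)`, since each
`t^{d-d_i}` makes up for the degree missing in `g_i`. Hence all its first partial derivatives are
homogeneous of degree `d - 1`. A homogeneous polynomial `p` of degree `k` restricts to the line
`γ(u) = u • (1, z₀)` as `p(1, z₀) u ^ k` (`alongCurve_of_isHomogeneous`), so it has order at least
`k` there, and exactly `k` when `p(1, z₀) ≠ 0`. For `p = ∂h/∂t` the value at `(1, z₀)` is
`Σ a_i (d - d_i) g_i(z₀)`, which is nonzero by hypothesis.
-/

/-- The vanishing order at `0` of a one-variable polynomial, with the convention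
that the zero polynomial has order `∞`. -/
noncomputable def pOrd (ψ : Polynomial ℂ) : ℕ∞ :=
  if ψ = 0 then ⊤ else (ψ.rootMultiplicity 0 : ℕ∞)

/-- Substitution of the curve `γ(u) = (u, u·z_0)` into a polynomial of `ℂ[t,z_1,…,z_n]`
(variable `0` playing the role of `t`, variable `j.succ` the role of `z_j`), producing
a one-variable polynomial in `u`. -/
noncomputable def alongCurve {n : ℕ} (z₀ : Fin n → ℂ) :
    MvPolynomial (Fin (n + 1)) ℂ →ₐ[ℂ] Polynomial ℂ :=
  MvPolynomial.aeval (Fin.cons Polynomial.X fun j => Polynomial.C (z₀ j) * Polynomial.X)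

open MvPolynomial in
theorem alongCurve_of_isHomogeneous {n k : ℕ} (z₀ : Fin n → ℂ)
    {p : MvPolynomial (Fin (n + 1)) ℂ} (hp : p.IsHomogeneous k) :
    alongCurve z₀ p =
      Polynomial.C (eval (Fin.cons 1 z₀ : Fin (n + 1) → ℂ) p) * Polynomial.X ^ k := by
  have hcurve : (Fin.cons Polynomial.X fun j => Polynomial.C (z₀ j) * Polynomial.X :
      Fin (n + 1) → Polynomial ℂ) =
      fun i => Polynomial.C ((Fin.cons 1 z₀ : Fin (n + 1) → ℂ) i) * Polynomial.X := by
    funext i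
    refine Fin.cases ?_ (fun j => ?_) i <;> simp
  rw [alongCurve, hcurve, aeval_def, eval₂_eq', eval_eq', map_sum, Finset.sum_mul]
  refine Finset.sum_congr rfl fun s hs => ?_
  have hdeg : ∑ i, s i = k := by
    rw [← hp (mem_support_iff.mp hs), Finsupp.weight_apply, Finsupp.sum_fintype _ _ (by simp)]
    simp
  simp only [mul_pow, Finset.prod_mul_distrib, Finset.prod_pow_eq_pow_sum, hdeg, map_mul,
    map_prod, map_pow, Polynomial.algebraMap_eq, mul_assoc]

theorem pOrd_C_mul_X_pow {c : ℂ} (hc : c ≠ 0) (k : ℕ) :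
    pOrd (Polynomial.C c * Polynomial.X ^ k) = k := by
  have hne : Polynomial.C c * Polynomial.X ^ k ≠ 0 := by simp [hc]
  have h0 := Polynomial.rootMultiplicity_X_sub_C_pow (0 : ℂ) k
  rw [Polynomial.C_0, sub_zero] at h0
  rw [pOrd, if_neg hne, Polynomial.rootMultiplicity_mul hne, Polynomial.rootMultiplicity_C, h0,
    zero_add]

theorem le_pOrd_C_mul_X_pow (c : ℂ) (k : ℕ) :
    (k : ℕ∞) ≤ pOrd (Polynomial.C c * Polynomial.X ^ k) := by
  by_cases hc : c = 0
  · simp [pOrd, hc]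
  · exact (pOrd_C_mul_X_pow hc k).ge

/-- For `h(t,z) = f_0(z) + Σ a_i t^{d-d_i} g_i(z)` with `f_0` homogeneous of degree
`d ≥ 1`, `g_i` homogeneous of degree `d_i < d`, and `z_0` with
`Σ a_i (d-d_i) g_i(z_0) ≠ 0`, the polynomial `u ↦ (∂h/∂t)(γ(u))` along the curve
`γ(u) = (u, u·z_0)` has order exactly `d-1` at `0`, each `u ↦ (∂h/∂z_j)(γ(u))` has
order at least `d-1`, and consequently
`ord₀((∂h/∂t)∘γ) ≤ min_j ord₀((∂h/∂z_j)∘γ)`: the strict Thom-type inequality fails. -/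
theorem thom_inequality_fails_along_curve
    (n : ℕ) (m : ℕ)
    (f₀ : MvPolynomial (Fin n) ℂ) (g : Fin m → MvPolynomial (Fin n) ℂ)
    (a : Fin m → ℂ) (d : ℕ) (hd : 1 ≤ d) (dd : Fin m → ℕ)
    (hf₀hom : f₀.IsHomogeneous d)
    (hghom : ∀ i, (g i).IsHomogeneous (dd i))
    (hdd : ∀ i, dd i < d)
    (h : MvPolynomial (Fin (n + 1)) ℂ)
    (hh : h = MvPolynomial.rename Fin.succ f₀ +
      ∑ i, MvPolynomial.C (a i) * (MvPolynomial.X 0) ^ (d - dd i) *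
        MvPolynomial.rename Fin.succ (g i))
    (z₀ : Fin n → ℂ)
    (hz₀ : ∑ i, a i * ((d - dd i : ℕ) : ℂ) * MvPolynomial.eval z₀ (g i) ≠ 0) :
    pOrd (alongCurve z₀ (MvPolynomial.pderiv 0 h)) = ((d - 1 : ℕ) : ℕ∞) ∧
    (∀ j : Fin n,
      ((d - 1 : ℕ) : ℕ∞) ≤ pOrd (alongCurve z₀ (MvPolynomial.pderiv j.succ h))) ∧
    pOrd (alongCurve z₀ (MvPolynomial.pderiv 0 h)) ≤
      Finset.univ.inf (fun j : Fin n =>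
        pOrd (alongCurve z₀ (MvPolynomial.pderiv j.succ h))) ∧
    ¬ (Finset.univ.inf (fun j : Fin n =>
        pOrd (alongCurve z₀ (MvPolynomial.pderiv j.succ h))) <
      pOrd (alongCurve z₀ (MvPolynomial.pderiv 0 h))) := by
  have hhom : h.IsHomogeneous d := by
    rw [hh]
    refine (hf₀hom.rename_isHomogeneous).add (MvPolynomial.IsHomogeneous.sum _ _ _ fun i _ => ?_)
    have hi := ((MvPolynomial.isHomogeneous_C (Fin (n + 1)) (a i)).mul
      (MvPolynomial.isHomogeneous_X_pow (R := ℂ) (0 : Fin (n + 1)) (d - dd i))).mul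
      ((hghom i).rename_isHomogeneous (f := Fin.succ))
    rwa [zero_add, Nat.sub_add_cancel (hdd i).le] at hi
  -- The polynomials pulled back from the `z`-variables do not involve `t`.
  have hrename : ∀ q : MvPolynomial (Fin n) ℂ,
      MvPolynomial.pderiv (0 : Fin (n + 1)) (MvPolynomial.rename Fin.succ q) = 0 := fun q =>
    MvPolynomial.pderiv_eq_zero_of_notMem_vars fun hmem => by
      classical
      obtain ⟨j, -, hj⟩ := Finset.mem_image.mp (MvPolynomial.vars_rename Fin.succ q hmem)
      exact Fin.succ_ne_zero j hj
  have heval : MvPolynomial.eval (Fin.cons 1 z₀ : Fin (n + 1) → ℂ) (MvPolynomial.pderiv 0 h) =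
      ∑ i, a i * ((d - dd i : ℕ) : ℂ) * MvPolynomial.eval z₀ (g i) := by
    have hcons : (Fin.cons 1 z₀ : Fin (n + 1) → ℂ) ∘ Fin.succ = z₀ := by
      funext j
      simp
    rw [hh, map_add, hrename, zero_add, map_sum, map_sum]
    refine Finset.sum_congr rfl fun i _ => ?_
    simp [hrename, MvPolynomial.eval_rename, hcons]
    ring
  have ht : pOrd (alongCurve z₀ (MvPolynomial.pderiv 0 h)) = ((d - 1 : ℕ) : ℕ∞) := by
    rw [alongCurve_of_isHomogeneous z₀ hhom.pderiv]
    exact pOrd_C_mul_X_pow (heval ▸ hz₀) _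
  have hz : ∀ j : Fin n,
      ((d - 1 : ℕ) : ℕ∞) ≤ pOrd (alongCurve z₀ (MvPolynomial.pderiv j.succ h)) := fun j => by
    rw [alongCurve_of_isHomogeneous z₀ hhom.pderiv]
    exact le_pOrd_C_mul_X_pow _ _
  have hle := Finset.le_inf (s := Finset.univ) fun j _ => ht.trans_le (hz j)
  exact ⟨ht, hz, hle, hle.not_gt⟩
end

section
/- Let f_0 ∈ ℂ[z_1,…,z_n] be homogeneous of degree d ≥ 1, let g_1,…,g_m ∈ ℂ[z_1,…,z_n] be homogeneous of degrees d_1,…,d_m with d_i < d for each i, let a_1,…,a_m ∈ ℂ, and define h(t,z) := f_0(z) + Σ_{i=1}^m a_i t^{d−d_i} g_i(z). Suppose there exists z_0 ∈ ℂⁿ with Σ_{i=1}^m a_i (d−d_i) g_i(z_0) ≠ 0. Then the t-axis does NOT satisfy Thom's a_h condition at the origin with respect to the ambient stratum: there exists a sequence p_k ∈ ℂ×ℂⁿ with ∇h(p_k) ≠ 0, p_k → (0,0), and ∇h(p_k)/‖∇h(p_k)‖ → v for some vector v ∈ ℂ^{1+n} whose first (t-)component is nonzero. -/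
/-!
The polynomial `h` is homogeneous of degree `d` in all `n + 1` variables, so every partial derivative
of `h` is homogeneous of degree `d - 1`. Along the real ray `(u, u z₀)`, `u > 0`, the gradient is
therefore `u ^ (d - 1)` times the fixed vector `G = ∇h(1, z₀)` (`gradEval_ray`), and its
normalization is constantly `G / ‖G‖`. The `t`-component of `G` is `∑ a_i (d - d_i) g_i(z₀) ≠ 0`,
because `f₀` and the `g_i` do not involve `t`; so the limit has nonzero `t`-component.
-/

/-- The gradient `∇h = (∂h/∂t, ∂h/∂z_1, …, ∂h/∂z_n)` of `h ∈ ℂ[t,z_1,…,z_n]`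
(variable `0` playing the role of `t`) evaluated at a point `(t,z) ∈ ℂ × ℂⁿ`. -/
noncomputable def gradEval {n : ℕ} (h : MvPolynomial (Fin (n + 1)) ℂ)
    (q : ℂ × (Fin n → ℂ)) : Fin (n + 1) → ℂ :=
  fun i => MvPolynomial.eval (Fin.cons q.1 q.2) (MvPolynomial.pderiv i h)

open MvPolynomial in
theorem eval_smul_of_isHomogeneous {σ : Type*} {φ : MvPolynomial σ ℂ} {e : ℕ}
    (hφ : φ.IsHomogeneous e) (c : ℂ) (x : σ → ℂ) :
    eval (c • x) φ = c ^ e * eval x φ := by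
  rw [eval_eq, eval_eq, Finset.mul_sum]
  refine Finset.sum_congr rfl fun s hs => ?_
  have hdeg : ∑ i ∈ s.support, s i = e := (hφ.degree_eq_sum_deg_support hs).symm
  simp only [Pi.smul_apply, smul_eq_mul, mul_pow, Finset.prod_mul_distrib,
    Finset.prod_pow_eq_pow_sum, hdeg]
  ring

open MvPolynomial in
theorem pderiv_zero_rename_succ {n : ℕ} (φ : MvPolynomial (Fin n) ℂ) :
    pderiv (0 : Fin (n + 1)) (rename Fin.succ φ) = 0 := by
  refine pderiv_eq_zero_of_notMem_vars fun h0 => ?_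
  obtain ⟨j, -, hj⟩ := Finset.mem_image.1 (vars_rename _ _ h0)
  exact Fin.succ_ne_zero j hj

theorem gradEval_ray {n d : ℕ} {h : MvPolynomial (Fin (n + 1)) ℂ} (hhom : h.IsHomogeneous d)
    (c : ℂ) (z : Fin n → ℂ) :
    gradEval h (c, c • z) = c ^ (d - 1) • gradEval h (1, z) := by
  funext i
  have hpt : (Fin.cons c (c • z) : Fin (n + 1) → ℂ) = c • Fin.cons 1 z := by
    funext j
    refine Fin.cases ?_ (fun j => ?_) j <;> simp
  simp only [gradEval, Pi.smul_apply, smul_eq_mul, hpt]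
  exact eval_smul_of_isHomogeneous hhom.pderiv c _

/-- **Lemma 2.2 (geometric form).** For `h(t,z) = f_0(z) + Σ a_i t^{d-d_i} g_i(z)`
with `f_0` homogeneous of degree `d ≥ 1`, `g_i` homogeneous of degree `d_i < d`,
and some `z_0` with `Σ a_i (d-d_i) g_i(z_0) ≠ 0`, the `t`-axis does not satisfy
Thom's `a_h` condition at the origin with respect to the ambient stratum: there is
a sequence `p_k → (0,0)` with `∇h(p_k) ≠ 0` whose normalized gradients converge to
a vector with nonzero `t`-component. -/
theorem thom_condition_fails
    (n : ℕ) (m : ℕ)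
    (f₀ : MvPolynomial (Fin n) ℂ) (g : Fin m → MvPolynomial (Fin n) ℂ)
    (a : Fin m → ℂ) (d : ℕ) (hd : 1 ≤ d) (dd : Fin m → ℕ)
    (hf₀hom : f₀.IsHomogeneous d)
    (hghom : ∀ i, (g i).IsHomogeneous (dd i))
    (hdd : ∀ i, dd i < d)
    (h : MvPolynomial (Fin (n + 1)) ℂ)
    (hh : h = MvPolynomial.rename Fin.succ f₀ +
      ∑ i, MvPolynomial.C (a i) * (MvPolynomial.X 0) ^ (d - dd i) *
        MvPolynomial.rename Fin.succ (g i))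
    (hz₀ : ∃ z₀ : Fin n → ℂ,
      ∑ i, a i * ((d - dd i : ℕ) : ℂ) * MvPolynomial.eval z₀ (g i) ≠ 0) :
    ∃ (p : ℕ → ℂ × (Fin n → ℂ)) (v : Fin (n + 1) → ℂ),
      (∀ k, gradEval h (p k) ≠ 0) ∧
      Filter.Tendsto p Filter.atTop (nhds (0, 0)) ∧
      Filter.Tendsto (fun k => (‖gradEval h (p k)‖)⁻¹ • gradEval h (p k))
        Filter.atTop (nhds v) ∧
      v 0 ≠ 0 := by
  obtain ⟨z₀, hz₀⟩ := hz₀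
  have hhom : h.IsHomogeneous d := by
    rw [hh]
    refine hf₀hom.rename_isHomogeneous.add (MvPolynomial.IsHomogeneous.sum _ _ _ fun i _ => ?_)
    have hi := (MvPolynomial.isHomogeneous_C_mul_X_pow (a i) (0 : Fin (n + 1)) (d - dd i)).mul
      ((hghom i).rename_isHomogeneous (f := Fin.succ))
    rwa [Nat.sub_add_cancel (hdd i).le] at hi
  set G := gradEval h (1, z₀) with hG
  have hG0 : G 0 ≠ 0 := by
    convert hz₀ using 1
    simp only [hG, gradEval, hh, map_add, map_sum, pderiv_zero_rename_succ, zero_add]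
    refine Finset.sum_congr rfl fun i _ => ?_
    rw [MvPolynomial.pderiv_mul, pderiv_zero_rename_succ, MvPolynomial.pderiv_C_mul,
      MvPolynomial.pderiv_pow, MvPolynomial.pderiv_X_self]
    simp [MvPolynomial.eval_rename, Function.comp_def]
  have hGne : G ≠ 0 := fun h0 => hG0 (by simp [h0])
  have hu : ∀ k : ℕ, (0 : ℝ) < 1 / ((k : ℝ) + 1) := fun k => Nat.one_div_pos_of_nat
  -- Scalars `u_k = 1 / (k + 1)`, kept as casts of positive reals so that normalization cancels them.
  let u : ℕ → ℂ := fun k => ((1 / ((k : ℝ) + 1) : ℝ) : ℂ)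
  have hgrad : ∀ k, gradEval h (u k, u k • z₀) = (1 / ((k : ℝ) + 1)) ^ (d - 1) • G := by
    intro k
    rw [gradEval_ray hhom, ← hG]
    funext i
    simp [u]
  have hutend : Filter.Tendsto u Filter.atTop (nhds 0) := by
    have := (Complex.continuous_ofReal.tendsto 0).comp
      (tendsto_one_div_add_atTop_nhds_zero_nat (𝕜 := ℝ))
    rwa [Complex.ofReal_zero] at this
  refine ⟨fun k => (u k, u k • z₀), ‖G‖⁻¹ • G, fun k => ?_, ?_, ?_, ?_⟩
  · rw [hgrad]
    exact smul_ne_zero (pow_pos (hu k) _).ne' hGne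
  · refine hutend.prodMk_nhds ?_
    simpa using hutend.smul_const z₀
  · refine tendsto_const_nhds.congr fun k => ?_
    have hc := pow_pos (hu k) (d - 1)
    rw [hgrad, norm_smul, Real.norm_of_nonneg hc.le, smul_smul, mul_inv, mul_right_comm,
      inv_mul_cancel₀ hc.ne', one_mul]
  · exact smul_ne_zero (inv_ne_zero (norm_ne_zero_iff.2 hGne)) hG0
end

section
/- Let f_0 ∈ ℂ[z_1,…,z_n] be homogeneous of degree d, and for 1 ≤ i ≤ r let g_i ∈ ℂ[z_1,…,z_n] be homogeneous of degree d_i and let p_i ∈ ℂ[t] be a nonzero polynomial with p_i(0) = 0; write k_i ≥ 1 for the trailing degree (order of vanishing at 0) of p_i and a_i ≠ 0 for its trailing coefficient. Assume d_i < d for at least one i. Let κ := lcm(k_1,…,k_r), let ν := max_{1≤i≤r} κ(d−d_i)/k_i (a positive integer), and let I := { i : κ(d−d_i)/k_i = ν }. Define f(t,z) := f_0(z) + Σ_{i=1}^r p_i(t) g_i(z) and fix τ ∈ ℂ. Then there exists a polynomial ℓ ∈ ℂ[s, z_1,…,z_n] such that: (a) for all s ∈ ℂ and z ∈ ℂⁿ,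 s^{κd} · ℓ(s,z) = f((sτ)^ν, s^κ z), where s^κ z := (s^κ z_1, …, s^κ z_n); and (b) for all z ∈ ℂⁿ, ℓ(0,z) = f_0(z) + Σ_{i∈I} a_i (τ^κ)^{d−d_i} g_i(z). -/
/-!
Write `p i = X ^ k i * q i` with `(q i).eval 0 = a i`. By homogeneity,
`p i ((sτ)^ν) * g i (s^κ z) = s^(ν k i + κ d_i) * τ^(ν k i) * q i ((sτ)^ν) * g i z`,
and `ν k i ≥ κ (d - d_i)` by maximality of `ν`, so `s^(κ d)` can be divided out, leaving the
exponent `e i = ν k i + κ d_i - κ d ≥ 0`. This gives `ℓ` explicitly. At `s = 0` only the summands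
with `e i = 0` survive; since `ν > 0`, these are exactly the ones with `i ∈ I`, and there
`τ^(ν k i) = (τ^κ)^(d - d_i)` and `q i ((sτ)^ν) = q i 0 = a i`.
-/

/-- Splitting off the full power of `X` from a polynomial leaves a cofactor whose value at `0` is
the trailing coefficient. -/
lemma exists_trailing_factor (p : Polynomial ℂ) :
    ∃ q : Polynomial ℂ, p = Polynomial.X ^ p.natTrailingDegree * q ∧
      q.eval 0 = p.trailingCoeff := by
  obtain ⟨q, hq⟩ : Polynomial.X ^ p.natTrailingDegree ∣ p :=
    Polynomial.X_pow_dvd_iff.2 fun m hm => Polynomial.coeff_eq_zero_of_lt_natTrailingDegree hm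
  refine ⟨q, hq, ?_⟩
  have h : p.coeff p.natTrailingDegree
      = (Polynomial.X ^ p.natTrailingDegree * q).coeff p.natTrailingDegree := by rw [← hq]
  rw [Polynomial.coeff_X_pow_mul', if_pos le_rfl, Nat.sub_self] at h
  rw [← Polynomial.coeff_zero_eq_eval_zero, ← h, Polynomial.trailingCoeff]

lemma eval_smul_of_isHomogeneous_s8 {n d : ℕ} {f : MvPolynomial (Fin n) ℂ} (hf : f.IsHomogeneous d)
    (c : ℂ) (z : Fin n → ℂ) :
    MvPolynomial.eval (c • z) f = c ^ d * MvPolynomial.eval z f := by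
  rw [MvPolynomial.eval_eq, MvPolynomial.eval_eq, Finset.mul_sum]
  refine Finset.sum_congr rfl fun m hm => ?_
  have hdeg : ∑ i ∈ m.support, m i = d := by
    have h := hf (MvPolynomial.mem_support_iff.1 hm)
    rwa [Finsupp.weight_apply, Finsupp.sum, Finset.sum_congr rfl
      (fun i _ => by simp : ∀ i ∈ m.support, m i • (1 : Fin n → ℕ) i = m i)] at h
  simp only [Pi.smul_apply, smul_eq_mul, mul_pow, Finset.prod_mul_distrib,
    Finset.prod_pow_eq_pow_sum, hdeg]
  ring

lemma eval_cons_rename_succ {n : ℕ} (f : MvPolynomial (Fin n) ℂ) (s : ℂ) (z : Fin n → ℂ) :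
    MvPolynomial.eval (Fin.cons s z : Fin (n + 1) → ℂ) (MvPolynomial.rename Fin.succ f)
      = MvPolynomial.eval z f := by
  rw [MvPolynomial.eval_rename]
  rfl

lemma eval_aeval_polynomial {m : ℕ} (x : Fin m → ℂ) (u : MvPolynomial (Fin m) ℂ)
    (q : Polynomial ℂ) :
    MvPolynomial.eval x (Polynomial.aeval u q) = q.eval (MvPolynomial.eval x u) := by
  rw [Polynomial.aeval_def, Polynomial.hom_eval₂]
  have h : (MvPolynomial.eval x).comp (algebraMap ℂ (MvPolynomial (Fin m) ℂ)) = RingHom.id ℂ := by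
    ext c
    simp [MvPolynomial.algebraMap_eq]
  rw [h]
  rfl

/-- Construction of the auxiliary polynomial `ℓ(s,z)` in the proof of Theorem 1.6:
with `f(t,z) = f_0(z) + Σ p_i(t) g_i(z)`, `k_i` the trailing degree and `a_i` the
trailing coefficient of `p_i`, `κ = lcm(k_1,…,k_r)`, `ν = max_i κ(d-d_i)/k_i` and
`I = {i : κ(d-d_i)/k_i = ν}`, there is a polynomial `ℓ ∈ ℂ[s,z_1,…,z_n]` with
`s^{κd} ℓ(s,z) = f((sτ)^ν, s^κ z)` and `ℓ(0,z) = f_0(z) + Σ_{i∈I} a_i (τ^κ)^{d-d_i} g_i(z)`.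
The variable `0` of `ℓ` plays the role of `s`. -/
theorem auxiliary_polynomial_exists
    (n : ℕ) (r : ℕ)
    (f₀ : MvPolynomial (Fin n) ℂ) (g : Fin r → MvPolynomial (Fin n) ℂ)
    (p : Fin r → Polynomial ℂ)
    (d : ℕ) (hf₀hom : f₀.IsHomogeneous d)
    (dd : Fin r → ℕ) (hghom : ∀ i, (g i).IsHomogeneous (dd i))
    (hpne : ∀ i, p i ≠ 0) (hp0 : ∀ i, (p i).eval 0 = 0)
    (k : Fin r → ℕ) (hk : ∀ i, k i = (p i).natTrailingDegree)
    (a : Fin r → ℂ) (ha : ∀ i, a i = (p i).trailingCoeff)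
    (hlow : ∃ i, dd i < d)
    (κ : ℕ) (hκ : κ = Finset.univ.lcm k)
    (ν : ℕ) (hν : ν = Finset.univ.sup (fun i => κ * (d - dd i) / k i))
    (I : Finset (Fin r)) (hI : I = Finset.univ.filter (fun i => κ * (d - dd i) / k i = ν))
    (τ : ℂ) :
    ∃ ℓ : MvPolynomial (Fin (n + 1)) ℂ,
      (∀ (s : ℂ) (z : Fin n → ℂ),
        s ^ (κ * d) * MvPolynomial.eval (Fin.cons s z) ℓ =
          MvPolynomial.eval (s ^ κ • z) f₀ +
            ∑ i, (p i).eval ((s * τ) ^ ν) * MvPolynomial.eval (s ^ κ • z) (g i)) ∧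
      (∀ z : Fin n → ℂ,
        MvPolynomial.eval (Fin.cons 0 z) ℓ =
          MvPolynomial.eval z f₀ +
            ∑ i ∈ I, a i * (τ ^ κ) ^ (d - dd i) * MvPolynomial.eval z (g i)) := by
  choose q hq hq0 using fun i => exists_trailing_factor (p i)
  have hkpos : ∀ i, 0 < k i := by
    intro i
    rw [hk i, Nat.pos_iff_ne_zero, Ne, Polynomial.natTrailingDegree_eq_zero, not_or, not_not]
    exact ⟨hpne i, by rw [Polynomial.coeff_zero_eq_eval_zero, hp0 i]⟩
  have hdvd : ∀ i, k i ∣ κ := fun i => hκ ▸ Finset.dvd_lcm (Finset.mem_univ i)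
  have hκpos : 0 < κ := by
    rw [Nat.pos_iff_ne_zero, hκ, Ne, Finset.lcm_eq_zero_iff]
    rintro ⟨i, -, hi⟩
    exact (hkpos i).ne' hi
  have hdiv : ∀ i, κ * (d - dd i) / k i * k i = κ * (d - dd i) := fun i =>
    Nat.div_mul_cancel ((hdvd i).mul_right _)
  have hle : ∀ i, κ * (d - dd i) / k i ≤ ν := fun i =>
    hν ▸ Finset.le_sup (f := fun i => κ * (d - dd i) / k i) (Finset.mem_univ i)
  have hνpos : 0 < ν := by
    obtain ⟨i, hi⟩ := hlow
    refine lt_of_lt_of_le (pos_of_mul_pos_left (b := k i) ?_ (Nat.zero_le _)) (hle i)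
    rw [hdiv]
    exact Nat.mul_pos hκpos (Nat.sub_pos_of_lt hi)
  have hle' : ∀ i, κ * (d - dd i) ≤ ν * k i := fun i =>
    hdiv i ▸ Nat.mul_le_mul_right _ (hle i)
  have hmemI : ∀ i, i ∈ I ↔ κ * (d - dd i) = ν * k i := by
    intro i
    rw [← hdiv i, Nat.mul_left_inj (hkpos i).ne', hI, Finset.mem_filter]
    exact and_iff_right (Finset.mem_univ i)
  have hexp : ∀ i, κ * d ≤ ν * k i + κ * dd i := by
    intro i
    calc κ * d ≤ κ * ((d - dd i) + dd i) := Nat.mul_le_mul_left _ (by omega)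
      _ = κ * (d - dd i) + κ * dd i := Nat.mul_add _ _ _
      _ ≤ _ := Nat.add_le_add_right (hle' i) _
  have hexp0 : ∀ i, ν * k i + κ * dd i - κ * d = 0 ↔ i ∈ I := by
    intro i
    have h1 := hexp i
    have h2 : 0 < ν * k i := Nat.mul_pos hνpos (hkpos i)
    rw [hmemI]
    rcases le_total (dd i) d with h | h
    · have h3 : κ * (d - dd i) + κ * dd i = κ * d := by
        rw [← Nat.mul_add, Nat.sub_add_cancel h]
      omega
    -- The truncated difference `d - dd i` vanishes, so both sides are false as `ν * k i > 0`.
    · have h3 : κ * d ≤ κ * dd i := Nat.mul_le_mul_left _ h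
      rw [Nat.sub_eq_zero_of_le h]
      omega
  refine ⟨MvPolynomial.rename Fin.succ f₀ + ∑ i,
    MvPolynomial.X 0 ^ (ν * k i + κ * dd i - κ * d) * MvPolynomial.C (τ ^ (ν * k i)) *
      Polynomial.aeval ((MvPolynomial.X 0 * MvPolynomial.C τ) ^ ν) (q i) *
      MvPolynomial.rename Fin.succ (g i), ?_, ?_⟩
  · intro s z
    simp only [map_add, map_sum, map_mul, map_pow, eval_cons_rename_succ, eval_aeval_polynomial,
      MvPolynomial.eval_X, MvPolynomial.eval_C, Fin.cons_zero]
    rw [mul_add, Finset.mul_sum, eval_smul_of_isHomogeneous_s8 hf₀hom, ← pow_mul]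
    congr 1
    refine Finset.sum_congr rfl fun i _ => ?_
    have hpi : (p i).eval ((s * τ) ^ ν) = (s * τ) ^ (ν * k i) * (q i).eval ((s * τ) ^ ν) := by
      conv_lhs => rw [hq i]
      rw [Polynomial.eval_mul, Polynomial.eval_pow, Polynomial.eval_X, ← hk i, ← pow_mul]
    have hs : s ^ (κ * d) * s ^ (ν * k i + κ * dd i - κ * d) = s ^ (ν * k i) * s ^ (κ * dd i) := by
      rw [← pow_add, ← pow_add, Nat.add_sub_cancel' (hexp i)]
    rw [hpi, eval_smul_of_isHomogeneous_s8 (hghom i), ← pow_mul, mul_pow s τ (ν * k i)]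
    linear_combination (τ ^ (ν * k i) * (q i).eval ((s * τ) ^ ν) * MvPolynomial.eval z (g i)) * hs
  · intro z
    simp only [map_add, map_sum, map_mul, map_pow, eval_cons_rename_succ, eval_aeval_polynomial,
      MvPolynomial.eval_X, MvPolynomial.eval_C, Fin.cons_zero]
    congr 1
    rw [← Finset.sum_subset (Finset.subset_univ I)]
    · refine Finset.sum_congr rfl fun i hi => ?_
      rw [(hexp0 i).2 hi, zero_mul, zero_pow hνpos.ne', hq0 i, ← ha i, ← (hmemI i).1 hi, pow_mul]
      ring
    · intro i _ hi
      rw [zero_pow (mt (hexp0 i).1 hi)]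
      simp
end
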